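/- Consider the five orbits of cycles of the model I dP_3 quiver under its D_6 node symmetry: 𝒪_1 = {H}, 𝒪_2 = {P_0,…,P_5}, 𝒪_3 = {C_0,…,C_5}, 𝒪_4 = {R_0,R_1,R_2}, 𝒪_5 = {T_0,T_1}. A subset 𝒮 ⊆ {𝒪_1, 𝒪_2, 𝒪_3, 𝒪_4, 𝒪_5} has the property that every one of the 12 arrows occurs exactly twice in total among the cycles belonging to the orbits in 𝒮 if and only if 𝒮 = {𝒪_3} or 𝒮 = {𝒪_1, 𝒪_4, 𝒪_5}. -/

import Mathlib

/-- The arrows of the model I dP₃ quiver: vertices are `ℤ/6`, with arrows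
`a i : i → i+1` and `b i : i → i+2` for each `i ∈ ℤ/6`. -/
inductive Arrow : Type
  | a : ZMod 6 → Arrow
  | b : ZMod 6 → Arrow
deriving DecidableEq

/-- The hexagon cycle `H = {a_0, a_1, a_2, a_3, a_4, a_5}`. -/
def cycH : Finset Arrow :=
  {Arrow.a 0, Arrow.a 1, Arrow.a 2, Arrow.a 3, Arrow.a 4, Arrow.a 5}

/-- The pentagon cycles `P_i = {a_i, a_{i+1}, a_{i+2}, a_{i+3}, b_{i+4}}`. -/
def cycP (i : ZMod 6) : Finset Arrow :=
  {Arrow.a i, Arrow.a (i + 1), Arrow.a (i + 2), Arrow.a (i + 3), Arrow.b (i + 4)}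

/-- The quadrilateral cycles `C_i = {a_i, a_{i+1}, b_{i+2}, b_{i+4}}`. -/
def cycC (i : ZMod 6) : Finset Arrow :=
  {Arrow.a i, Arrow.a (i + 1), Arrow.b (i + 2), Arrow.b (i + 4)}

/-- The quadrilateral cycles `R_i = {a_i, b_{i+1}, a_{i+3}, b_{i+4}}`. -/
def cycR (i : ZMod 6) : Finset Arrow :=
  {Arrow.a i, Arrow.b (i + 1), Arrow.a (i + 3), Arrow.b (i + 4)}

/-- The triangle cycle `T_0 = {b_0, b_2, b_4}`. -/
def cycT0 : Finset Arrow := {Arrow.b 0, Arrow.b 2, Arrow.b 4}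

/-- The triangle cycle `T_1 = {b_1, b_3, b_5}`. -/
def cycT1 : Finset Arrow := {Arrow.b 1, Arrow.b 3, Arrow.b 5}

/-- The five orbits of cycles under the `D_6` node symmetry:
`𝒪_1 = {H}`, `𝒪_2 = {P_0,…,P_5}`, `𝒪_3 = {C_0,…,C_5}`, `𝒪_4 = {R_0,R_1,R_2}`,
`𝒪_5 = {T_0,T_1}` (indexed here by `0,…,4`). -/
def orbit : Fin 5 → Finset (Finset Arrow) :=
  ![{cycH},
    {cycP 0, cycP 1, cycP 2, cycP 3, cycP 4, cycP 5},
    {cycC 0, cycC 1, cycC 2, cycC 3, cycC 4, cycC 5},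
    {cycR 0, cycR 1, cycR 2},
    {cycT0, cycT1}]

/-!
Rotations of the quiver permute the arrows `a i` transitively and the arrows `b i` transitively,
and each of the five families of cycles is a single orbit of the rotations. So the number of
cycles of `orbit k` through an arrow depends only on its type, and the twelve conditions reduce
to two equations in the indicators `x k` of `k ∈ S`:

  `x 0 + 4 * x 1 + 2 * x 2 + x 3 = 2` and `x 1 + 2 * x 2 + x 3 + x 4 = 2`.

The first forces `x 1 = 0`; then `x 2 = 1` makes all others vanish, while `x 2 = 0` forces
`x 0 = x 3 = 1` and hence `x 4 = 1`.
-/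

open scoped Pointwise

/-- The number of members of the family `𝒞` that contain `x`. -/
def occurrences {α : Type*} [DecidableEq α] (𝒞 : Finset (Finset α)) (x : α) : ℕ :=
  ∑ c ∈ 𝒞, if x ∈ c then 1 else 0

theorem occurrences_vadd_of_vadd_eq {G α : Type*} [AddGroup G] [AddAction G α] [DecidableEq α]
    {g : G} {𝒞 : Finset (Finset α)} (h𝒞 : g +ᵥ 𝒞 = 𝒞) (x : α) :
    occurrences 𝒞 (g +ᵥ x) = occurrences 𝒞 x :=
  calc occurrences 𝒞 (g +ᵥ x)
    _ = occurrences (g +ᵥ 𝒞) (g +ᵥ x) := by rw [h𝒞]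
    _ = ∑ c ∈ 𝒞, if g +ᵥ x ∈ g +ᵥ c then 1 else 0 :=
      Finset.sum_image (AddAction.injective g).injOn
    _ = occurrences 𝒞 x := by simp only [Finset.vadd_mem_vadd_finset_iff, occurrences]

/-- The rotations of the quiver: `j` sends vertex `i` to `j + i`, hence `a i` to `a (j + i)` and
`b i` to `b (j + i)`. -/
instance : AddAction (ZMod 6) Arrow where
  vadd
    | j, .a i => .a (j + i)
    | j, .b i => .b (j + i)
  zero_vadd
    | .a i => congrArg Arrow.a (zero_add i)
    | .b i => congrArg Arrow.b (zero_add i)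
  add_vadd
    | j, k, .a i => congrArg Arrow.a (add_assoc j k i)
    | j, k, .b i => congrArg Arrow.b (add_assoc j k i)

theorem vadd_a_zero (i : ZMod 6) : i +ᵥ Arrow.a 0 = Arrow.a i :=
  congrArg Arrow.a (add_zero i)

theorem vadd_b_zero (i : ZMod 6) : i +ᵥ Arrow.b 0 = Arrow.b i :=
  congrArg Arrow.b (add_zero i)

/-- One cycle from each of the five orbits, in the order of `orbit`. -/
def orbitRep : Fin 5 → Finset Arrow :=
  ![cycH, cycP 0, cycC 0, cycR 0, cycT0]

theorem orbit_eq_image_vadd_orbitRep (k : Fin 5) :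
    orbit k = Finset.univ.image fun j : ZMod 6 ↦ j +ᵥ orbitRep k := by
  decide +revert

theorem coe_orbit (k : Fin 5) :
    (orbit k : Set (Finset Arrow)) = AddAction.orbit (ZMod 6) (orbitRep k) := by
  rw [orbit_eq_image_vadd_orbitRep, Finset.coe_image, Finset.coe_univ, Set.image_univ,
    AddAction.orbit]

theorem vadd_orbit (j : ZMod 6) (k : Fin 5) : j +ᵥ orbit k = orbit k := by
  rw [← Finset.coe_inj, Finset.coe_vadd_finset, coe_orbit, AddAction.vadd_orbit]

/-- The number of cycles of each orbit that pass through a given arrow `a i`. -/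
def aMultiplicity : Fin 5 → ℕ := ![1, 4, 2, 1, 0]

/-- The number of cycles of each orbit that pass through a given arrow `b i`. -/
def bMultiplicity : Fin 5 → ℕ := ![0, 1, 2, 1, 1]

theorem occurrences_orbit_a (k : Fin 5) (i : ZMod 6) :
    occurrences (orbit k) (.a i) = aMultiplicity k := by
  have at_zero : occurrences (orbit k) (.a 0) = aMultiplicity k := by decide +revert
  rw [← vadd_a_zero, occurrences_vadd_of_vadd_eq (vadd_orbit i k), at_zero]

theorem occurrences_orbit_b (k : Fin 5) (i : ZMod 6) :
    occurrences (orbit k) (.b i) = bMultiplicity k := by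
  have at_zero : occurrences (orbit k) (.b 0) = bMultiplicity k := by decide +revert
  rw [← vadd_b_zero, occurrences_vadd_of_vadd_eq (vadd_orbit i k), at_zero]

theorem forall_sum_occurrences_eq_iff (S : Finset (Fin 5)) (n : ℕ) :
    (∀ x : Arrow, ∑ k ∈ S, occurrences (orbit k) x = n) ↔
      ∑ k ∈ S, aMultiplicity k = n ∧ ∑ k ∈ S, bMultiplicity k = n := by
  constructor
  · intro h
    exact ⟨by simpa only [occurrences_orbit_a] using h (.a 0),
      by simpa only [occurrences_orbit_b] using h (.b 0)⟩
  · rintro ⟨ha, hb⟩ (i | i)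
    · simpa only [occurrences_orbit_a] using ha
    · simpa only [occurrences_orbit_b] using hb

theorem sum_aMultiplicity (S : Finset (Fin 5)) :
    ∑ k ∈ S, aMultiplicity k =
      (if 0 ∈ S then 1 else 0) + (if 1 ∈ S then 4 else 0) + (if 2 ∈ S then 2 else 0) +
        (if 3 ∈ S then 1 else 0) := by
  rw [← Finset.univ_inter S, ← Finset.sum_ite_mem, Fin.sum_univ_five]
  simp [aMultiplicity]

theorem sum_bMultiplicity (S : Finset (Fin 5)) :
    ∑ k ∈ S, bMultiplicity k =
      (if 1 ∈ S then 1 else 0) + (if 2 ∈ S then 2 else 0) + (if 3 ∈ S then 1 else 0) +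
        (if 4 ∈ S then 1 else 0) := by
  rw [← Finset.univ_inter S, ← Finset.sum_ite_mem, Fin.sum_univ_five]
  simp [bMultiplicity]

theorem sum_multiplicities_eq_two_iff (S : Finset (Fin 5)) :
    (∑ k ∈ S, aMultiplicity k = 2 ∧ ∑ k ∈ S, bMultiplicity k = 2) ↔
      S = {2} ∨ S = {0, 3, 4} := by
  constructor
  · rintro ⟨ha, hb⟩
    rw [sum_aMultiplicity] at ha
    rw [sum_bMultiplicity] at hb
    have hP : 1 ∉ S := by grind
    by_cases hC : 2 ∈ S
    · left
      have hH : 0 ∉ S := by grind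
      have hR : 3 ∉ S := by grind
      have hT : 4 ∉ S := by grind
      ext k
      fin_cases k <;> simp [hH, hP, hC, hR, hT]
    · right
      have hH : 0 ∈ S := by grind
      have hR : 3 ∈ S := by grind
      have hT : 4 ∈ S := by grind
      ext k
      fin_cases k <;> simp [hH, hP, hC, hR, hT]
  · rintro (rfl | rfl) <;> decide

/-- a subset `𝒮` of the five orbits has every one of the 12 arrows
occurring exactly twice in total among the cycles of the orbits in `𝒮` if and only if
`𝒮 = {𝒪_3}` or `𝒮 = {𝒪_1, 𝒪_4, 𝒪_5}`. -/
theorem statement13 (S : Finset (Fin 5)) :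
    (∀ x : Arrow, (∑ k ∈ S, ∑ c ∈ orbit k, (if x ∈ c then 1 else 0)) = 2)
      ↔ S = {2} ∨ S = {0, 3, 4} := by
  rw [← sum_multiplicities_eq_two_iff, ← forall_sum_occurrences_eq_iff]
  simp only [occurrences]
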